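/- arXiv:1005.0724 — 2 statements merged into one kernel-verified Lean document; each statement's English description precedes it below -/
import Mathlib

section
/- Let m >= 1 and n > m be integers. Let mu, mu' : Q_p^* -> C^* be group homomorphisms such that mu is trivial on 1 + p^{n-m} Z_p, mu' is trivial on 1 + p^m Z_p, and neither mu nor mu' is unramified; set alpha = mu(p)^{-1} * sqrt(p). Let v : G -> C be a function such that: (i) v(b*g) = mu(a) * mu'(d) * |a/d|^{1/2} * v(g) for every b = [[a,b0],[0,d]] in B and g in G; (ii) v(g*k) = mu(d) * mu'(d) * v(g) for every g in G and every k in I_n whose (2,2) entry is d; (iii) v(k) = 0 for every k in K not lying in I_m \ I_{m+1}; (iv) v([[1,0],[p^m,1]]) = 1. Then for every integer r >= 0 and every k in K: v(k*gamma^r) = alpha^r * mu(p^{m+r} * det(k) / c) * mu'(d) if k = [[*,*],[c,d]] lies in I_{m+r} \ I_{m+r+1}, and v(k*gamma^r) = 0 otherwise. -/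
open Matrix

noncomputable section

variable (p : ℕ) [Fact p.Prime]

/-- The underlying matrix of an element of `GL₂(ℚ_p)`. -/
def mat (g : GL (Fin 2) ℚ_[p]) : Matrix (Fin 2) (Fin 2) ℚ_[p] := g

/-- Membership in `K = GL₂(ℤ_p)`: all entries are `p`-adic integers and the
determinant is a unit of `ℤ_p`. -/
def inK (g : GL (Fin 2) ℚ_[p]) : Prop :=
  (∀ i j, ‖mat p g i j‖ ≤ 1) ∧ ‖(mat p g).det‖ = 1

/-- Membership in the Iwahori subgroup `I_n` of `K`: for `n = 0`, `I_0 = K`;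
for `n ≥ 1`, the diagonal entries are units of `ℤ_p` and the lower left entry
lies in `p^n ℤ_p`. -/
def inI (n : ℕ) (g : GL (Fin 2) ℚ_[p]) : Prop :=
  inK p g ∧ (n = 0 ∨
    (‖mat p g 0 0‖ = 1 ∧ ‖mat p g 1 1‖ = 1 ∧ ‖mat p g 1 0‖ ≤ (p : ℝ) ^ (-(n : ℤ))))

/-- `p` as a unit of `ℚ_p`. -/
def pu : ℚ_[p]ˣ :=
  Units.mk0 (p : ℚ_[p]) (by exact_mod_cast (Fact.out : p.Prime).ne_zero)

/-- The element `γ = diag(p⁻¹, 1)` of `GL₂(ℚ_p)`. -/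
def gamma : GL (Fin 2) ℚ_[p] :=
  Matrix.GeneralLinearGroup.mkOfDetNeZero !![(p : ℚ_[p])⁻¹, 0; 0, 1] (by
    have hp : (p : ℚ_[p]) ≠ 0 := by exact_mod_cast (Fact.out : p.Prime).ne_zero
    simp [Matrix.det_fin_two_of, hp])

/-- A character of `ℚ_p^×` is unramified if it is trivial on `ℤ_p^×`. -/
def Unramified (μ : ℚ_[p]ˣ →* ℂˣ) : Prop :=
  ∀ u : ℚ_[p]ˣ, ‖(u : ℚ_[p])‖ = 1 → μ u = 1

/-- A character of `ℚ_p^×` is trivial on `1 + p^j ℤ_p`. -/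
def TrivialOnOnePlusP (j : ℕ) (μ : ℚ_[p]ˣ →* ℂˣ) : Prop :=
  ∀ u : ℚ_[p]ˣ, ‖(u : ℚ_[p]) - 1‖ ≤ (p : ℝ) ^ (-(j : ℤ)) → μ u = 1

/-- The element `[[1,0],[p^m,1]]` of `GL₂(ℚ_p)`. -/
def lowerPm (m : ℕ) : GL (Fin 2) ℚ_[p] :=
  Matrix.GeneralLinearGroup.mkOfDetNeZero !![(1 : ℚ_[p]), 0; (p : ℚ_[p]) ^ m, 1] (by
    simp [Matrix.det_fin_two_of])

/-
The Iwasawa decomposition `G = B K` turns the support condition into: `v` vanishes off the set of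
`g = [[a, b], [c, d]]` with `|c| = p^{-m} |d|`. On this set the factorization
`g = [[p^m det g / c, b], [0, d]] [[1, 0], [p^m, 1]] diag(c / (p^m d), 1)` has a `p`-adic unit in
its last factor, so the transformation laws compute `v g`. Replacing `g` by `g γ^r` divides `c` and
`det g` by `p^r`: the condition becomes `|c| = p^{-(m+r)} |d|`, and the upper left entry
`p^m det g / c` becomes `p^{-r}` times `p^{m+r} det g / c`. Both `μ(p)^{-r}` and `√p^r` in `α^r`
come from this factor `p^{-r}`.
-/

section Factorizations

variable {F : Type*} [Field F]

/-- The element `[[a, x], [0, d]]` of the Borel subgroup, with its diagonal entries given as units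
so that characters can be evaluated on them. -/
def borelElement (a : Fˣ) (x : F) (d : Fˣ) : GL (Fin 2) F :=
  GeneralLinearGroup.mkOfDetNeZero !![(a : F), x; 0, (d : F)] (by simp [det_fin_two_of])

/-- The lower triangular unipotent element `[[1, 0], [x, 1]]`. -/
def lowerUnipotent (x : F) : GL (Fin 2) F :=
  GeneralLinearGroup.mkOfDetNeZero !![1, 0; x, 1] (by simp [det_fin_two_of])

/-- The element `[[0, 1], [1, x]] = w [[1, x], [0, 1]]`, a representative of the Bruhat cell
`B w B`. -/
def weylUnipotent (x : F) : GL (Fin 2) F :=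
  GeneralLinearGroup.mkOfDetNeZero !![0, 1; 1, x] (by simp [det_fin_two_of])

@[simp]
lemma coe_borelElement (a : Fˣ) (x : F) (d : Fˣ) :
    (borelElement a x d : Matrix (Fin 2) (Fin 2) F) = !![(a : F), x; 0, (d : F)] :=
  rfl

@[simp]
lemma coe_lowerUnipotent (x : F) :
    (lowerUnipotent x : Matrix (Fin 2) (Fin 2) F) = !![1, 0; x, 1] :=
  rfl

@[simp]
lemma coe_weylUnipotent (x : F) :
    (weylUnipotent x : Matrix (Fin 2) (Fin 2) F) = !![0, 1; 1, x] :=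
  rfl

lemma eq_borelElement_mul_lowerUnipotent (g : GL (Fin 2) F) (d : Fˣ) (hd : g 1 1 = d) :
    g = borelElement (GeneralLinearGroup.det g / d) (g 0 1) d * lowerUnipotent (g 1 0 / d) := by
  have h00 : g 0 0 = g.det / d + g 0 1 * (g 1 0 / d) := by
    rw [GeneralLinearGroup.val_det_apply, det_fin_two, hd]
    field_simp
    ring
  have h10 : g 1 0 = d * (g 1 0 / d) := by field_simp
  ext i j
  fin_cases i <;> fin_cases j
  · simpa [mul_apply] using h00
  · simp
  · simpa [mul_apply] using h10
  · simpa [mul_apply] using hd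

lemma eq_borelElement_mul_weylUnipotent (g : GL (Fin 2) F) (c : Fˣ) (hc : g 1 0 = c) :
    g = borelElement (-GeneralLinearGroup.det g / c) (g 0 0) c * weylUnipotent (g 1 1 / c) := by
  have h01 : g 0 1 = -g.det / c + g 0 0 * (g 1 1 / c) := by
    rw [GeneralLinearGroup.val_det_apply, det_fin_two, hc]
    field_simp
    ring
  have h11 : g 1 1 = c * (g 1 1 / c) := by field_simp
  ext i j
  fin_cases i <;> fin_cases j
  · simp
  · simpa [mul_apply] using h01
  · simpa [mul_apply] using hc
  · simpa [mul_apply] using h11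

lemma eq_borelElement_mul_lowerUnipotent_mul_borelElement (g : GL (Fin 2) F) (c d t : Fˣ)
    (hc : g 1 0 = c) (hd : g 1 1 = d) :
    g = borelElement (t * GeneralLinearGroup.det g / c) (g 0 1) d * lowerUnipotent (t : F) *
      borelElement (c / (t * d)) 0 1 := by
  have h00 : g 0 0 = (t * g.det / c + g 0 1 * t) * (c / (t * d)) := by
    rw [GeneralLinearGroup.val_det_apply, det_fin_two, hc, hd]
    field_simp
    ring
  have h10 : g 1 0 = d * t * (c / (t * d)) := by
    rw [hc]
    field_simp
  ext i j
  fin_cases i <;> fin_cases j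
  · simpa [mul_apply] using h00
  · simp
  · simpa [mul_apply] using h10
  · simpa [mul_apply] using hd

end Factorizations

section Integral

variable {p}

lemma inK_lowerUnipotent {x : ℚ_[p]} (hx : ‖x‖ ≤ 1) : inK p (lowerUnipotent x) := by
  simp [inK, mat, Fin.forall_fin_two, hx]

lemma inK_weylUnipotent {x : ℚ_[p]} (hx : ‖x‖ ≤ 1) : inK p (weylUnipotent x) := by
  simp [inK, mat, Fin.forall_fin_two, hx]

lemma inI_borelElement_zero_one {ε : ℚ_[p]ˣ} (hε : ‖(ε : ℚ_[p])‖ = 1) (n : ℕ) :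
    inI p n (borelElement ε 0 1) := by
  simp [inI, inK, mat, Fin.forall_fin_two, hε]

theorem exists_eq_borelElement_mul_inK (g : GL (Fin 2) ℚ_[p]) :
    ∃ (a : ℚ_[p]ˣ) (x : ℚ_[p]) (d : ℚ_[p]ˣ) (k : GL (Fin 2) ℚ_[p]),
      inK p k ∧ g = borelElement a x d * k := by
  obtain h | h := lt_or_ge ‖g 1 0‖ ‖g 1 1‖
  · have hd : g 1 1 ≠ 0 := norm_pos_iff.1 ((norm_nonneg _).trans_lt h)
    refine ⟨_, _, _, _, inK_lowerUnipotent ?_,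
      eq_borelElement_mul_lowerUnipotent g (.mk0 _ hd) rfl⟩
    simpa using div_le_one_of_le₀ h.le (norm_nonneg _)
  · have hc : g 1 0 ≠ 0 := by
      intro hc
      have hd : g 1 1 = 0 := by simpa [hc] using h
      have hdet := (GeneralLinearGroup.det g).ne_zero
      simp [det_fin_two, hc, hd] at hdet
    refine ⟨_, _, _, _, inK_weylUnipotent ?_,
      eq_borelElement_mul_weylUnipotent g (.mk0 _ hc) rfl⟩
    simpa using div_le_one_of_le₀ h (norm_nonneg _)

lemma norm_le_zpow_and_not_norm_le_zpow_iff (x : ℚ_[p]) (n : ℕ) :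
    ‖x‖ ≤ (p : ℝ) ^ (-(n : ℤ)) ∧ ¬ ‖x‖ ≤ (p : ℝ) ^ (-((n + 1 : ℕ) : ℤ)) ↔
      ‖x‖ = (p : ℝ) ^ (-(n : ℤ)) := by
  rw [Padic.norm_le_pow_iff_norm_lt_pow_add_one x (-((n + 1 : ℕ) : ℤ)), not_lt,
    Nat.cast_succ, neg_add, neg_add_cancel_right, le_antisymm_iff]

lemma inK.norm_diag_eq_one {k : GL (Fin 2) ℚ_[p]} (hk : inK p k) (hc : ‖mat p k 1 0‖ < 1) :
    ‖mat p k 0 0‖ = 1 ∧ ‖mat p k 1 1‖ = 1 := by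
  have hsub : mat p k 0 0 * mat p k 1 1 - (mat p k).det = mat p k 0 1 * mat p k 1 0 := by
    rw [det_fin_two, sub_sub_cancel]
  have had : ‖mat p k 0 0‖ * ‖mat p k 1 1‖ = 1 := by
    rw [← norm_mul, ← hk.2]
    apply Padic.norm_eq_of_norm_sub_lt_right
    rw [hsub, hk.2, norm_mul]
    exact mul_lt_one_of_nonneg_of_lt_one_right (hk.1 0 1) (norm_nonneg _) hc
  constructor <;>
    nlinarith [hk.1 0 0, hk.1 1 1, norm_nonneg (mat p k 0 0), norm_nonneg (mat p k 1 1)]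

lemma zpow_neg_natCast_lt_one {n : ℕ} (hn : 1 ≤ n) : (p : ℝ) ^ (-(n : ℤ)) < 1 :=
  zpow_lt_one_of_neg₀ (mod_cast (Fact.out : p.Prime).one_lt) (by lia)

lemma inK.inI_iff {k : GL (Fin 2) ℚ_[p]} (hk : inK p k) {n : ℕ} (hn : 1 ≤ n) :
    inI p n k ↔ ‖mat p k 1 0‖ ≤ (p : ℝ) ^ (-(n : ℤ)) := by
  refine ⟨fun h ↦ (h.2.resolve_left (by lia)).2.2, fun hc ↦ ⟨hk, .inr ?_⟩⟩
  obtain ⟨ha, hd⟩ := hk.norm_diag_eq_one (hc.trans_lt (zpow_neg_natCast_lt_one hn))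
  exact ⟨ha, hd, hc⟩

-- The condition on the right is invariant under scaling the bottom row, so it makes sense on all
-- of `G` and is stable under left multiplication by the Borel subgroup.
theorem inK.inI_and_not_inI_succ_iff {k : GL (Fin 2) ℚ_[p]} (hk : inK p k) {n : ℕ} (hn : 1 ≤ n) :
    inI p n k ∧ ¬ inI p (n + 1) k ↔
      ‖mat p k 1 0‖ = (p : ℝ) ^ (-(n : ℤ)) * ‖mat p k 1 1‖ := by
  rw [hk.inI_iff hn, hk.inI_iff (by lia), norm_le_zpow_and_not_norm_le_zpow_iff]
  have hd (hc : ‖mat p k 1 0‖ ≤ (p : ℝ) ^ (-(n : ℤ))) : ‖mat p k 1 1‖ = 1 :=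
    (hk.norm_diag_eq_one (hc.trans_lt (zpow_neg_natCast_lt_one hn))).2
  constructor <;> intro hc
  · rw [hd hc.le, mul_one, hc]
  · rwa [hd (hc.trans_le (mul_le_of_le_one_right (by positivity) (hk.1 1 1))), mul_one] at hc

end Integral

section GammaTranslate

variable {p}

@[simp]
lemma coe_pu : (pu p : ℚ_[p]) = p :=
  rfl

lemma mat_mul_gamma_pow (g : GL (Fin 2) ℚ_[p]) (r : ℕ) :
    mat p (g * gamma p ^ r) =
      !![mat p g 0 0 / p ^ r, mat p g 0 1; mat p g 1 0 / p ^ r, mat p g 1 1] := by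
  induction r with
  | zero => simpa using eta_fin_two (mat p g)
  | succ r ih =>
    have hmul : mat p (g * gamma p ^ (r + 1)) =
        mat p (g * gamma p ^ r) * !![(p : ℚ_[p])⁻¹, 0; 0, 1] := by
      rw [pow_succ, ← mul_assoc]
      rfl
    rw [hmul, ih]
    simp [pow_succ, div_eq_mul_inv, mul_comm, mul_assoc]

lemma det_mat_mul_gamma_pow (g : GL (Fin 2) ℚ_[p]) (r : ℕ) :
    (mat p (g * gamma p ^ r)).det = (mat p g).det / p ^ r := by
  rw [mat_mul_gamma_pow, det_fin_two_of, det_fin_two]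
  ring

lemma norm_mat_mul_gamma_pow_iff (g : GL (Fin 2) ℚ_[p]) (m r : ℕ) :
    ‖mat p (g * gamma p ^ r) 1 0‖ = (p : ℝ) ^ (-(m : ℤ)) * ‖mat p (g * gamma p ^ r) 1 1‖ ↔
      ‖mat p g 1 0‖ = (p : ℝ) ^ (-((m + r : ℕ) : ℤ)) * ‖mat p g 1 1‖ := by
  have hp : (p : ℝ) ≠ 0 := mod_cast (Fact.out : p.Prime).ne_zero
  have h10 : mat p (g * gamma p ^ r) 1 0 = mat p g 1 0 / p ^ r := by simp [mat_mul_gamma_pow]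
  have h11 : mat p (g * gamma p ^ r) 1 1 = mat p g 1 1 := by simp [mat_mul_gamma_pow]
  rw [h10, h11, norm_div, Padic.norm_p_pow, div_eq_iff (zpow_ne_zero _ hp), Nat.cast_add, neg_add,
    zpow_add₀ hp, mul_right_comm]

lemma sqrt_norm_inv_p_pow_mul (r : ℕ) (x : ℚ_[p]) :
    Real.sqrt ‖((p : ℚ_[p]) ^ r)⁻¹ * x‖ = Real.sqrt p ^ r * Real.sqrt ‖x‖ := by
  have hpow : (p : ℝ) ^ r = (Real.sqrt p ^ r) ^ 2 := by
    rw [pow_right_comm, Real.sq_sqrt p.cast_nonneg]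
  rw [norm_mul, norm_inv, norm_pow, Padic.norm_p, inv_pow, inv_inv, Real.sqrt_mul (by positivity),
    hpow, Real.sqrt_sq (by positivity)]

end GammaTranslate

section Induced

variable {p} {μ μ' : ℚ_[p]ˣ →* ℂˣ} {v : GL (Fin 2) ℚ_[p] → ℂ} {m : ℕ}

/-- The transformation law under the Borel subgroup of the functions in the normalized induction
`Ind_B^G (μ ⊗ μ')`. Smoothness is not part of the definition. -/
def IsInducedFrom (μ μ' : ℚ_[p]ˣ →* ℂˣ) (v : GL (Fin 2) ℚ_[p] → ℂ) : Prop :=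
  ∀ (b g : GL (Fin 2) ℚ_[p]) (a d : ℚ_[p]ˣ),
    mat p b 1 0 = 0 → mat p b 0 0 = a → mat p b 1 1 = d →
    v (b * g) = (μ a : ℂ) * (μ' d : ℂ) *
      (Real.sqrt ‖(a : ℚ_[p]) / (d : ℚ_[p])‖ : ℂ) * v g

/-- Invariance of `v` under right translation by the integral torus of all `diag(ε, 1)` with
`ε ∈ ℤ_p^×`. -/
def IsUnitTorusInvariant (v : GL (Fin 2) ℚ_[p] → ℂ) : Prop :=
  ∀ (g : GL (Fin 2) ℚ_[p]) (ε : ℚ_[p]ˣ), ‖(ε : ℚ_[p])‖ = 1 → v (g * borelElement ε 0 1) = v g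

theorem IsInducedFrom.eq_zero_of_norm_ne (hv : IsInducedFrom μ μ' v) (hm : 1 ≤ m)
    (hvsupp : ∀ k, inK p k → ¬ (inI p m k ∧ ¬ inI p (m + 1) k) → v k = 0)
    {g : GL (Fin 2) ℚ_[p]}
    (hg : ‖mat p g 1 0‖ ≠ (p : ℝ) ^ (-(m : ℤ)) * ‖mat p g 1 1‖) : v g = 0 := by
  obtain ⟨a, x, d, k, hk, rfl⟩ := exists_eq_borelElement_mul_inK g
  have hrow (j : Fin 2) : mat p (borelElement a x d * k) 1 j = d * mat p k 1 j := by
    simp [mat, mul_apply]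
  rw [hv _ _ a d rfl rfl rfl, hvsupp k hk ?_, mul_zero]
  rw [hk.inI_and_not_inI_succ_iff hm]
  intro hk10
  apply hg
  rw [hrow, hrow, norm_mul, norm_mul, hk10, mul_left_comm]

theorem IsInducedFrom.apply_of_norm_eq (hv : IsInducedFrom μ μ' v)
    (hvT : IsUnitTorusInvariant v) {g : GL (Fin 2) ℚ_[p]} {u d : ℚ_[p]ˣ}
    (hg : ‖mat p g 1 0‖ = (p : ℝ) ^ (-(m : ℤ)) * ‖mat p g 1 1‖)
    (hu : (u : ℚ_[p]) = (p : ℚ_[p]) ^ m * (mat p g).det / mat p g 1 0)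
    (hd : mat p g 1 1 = d) :
    v g = (μ u : ℂ) * (μ' d : ℂ) * (Real.sqrt ‖(u : ℚ_[p]) / (d : ℚ_[p])‖ : ℂ) *
      v (lowerPm p m) := by
  have hc : mat p g 1 0 ≠ 0 := fun hc ↦ u.ne_zero (by rw [hu, hc, div_zero])
  set c := Units.mk0 _ hc
  have hu' : u = pu p ^ m * GeneralLinearGroup.det g / c := by
    ext
    simpa [c, mat] using hu
  have hε : ‖((c / (pu p ^ m * d) : ℚ_[p]ˣ) : ℚ_[p])‖ = 1 := by
    have hcd : ‖(c : ℚ_[p])‖ = ‖((pu p ^ m * d : ℚ_[p]ˣ) : ℚ_[p])‖ := by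
      rw [Units.val_mul, Units.val_pow_eq_pow_val, coe_pu, norm_mul, Padic.norm_p_pow, ← hd]
      exact hg
    rw [Units.val_div_eq_div_val, norm_div, hcd, div_self (norm_ne_zero_iff.2 (Units.ne_zero _))]
  have hlower : lowerPm p m = lowerUnipotent ((pu p ^ m : ℚ_[p]ˣ) : ℚ_[p]) := by
    ext
    simp [lowerPm, pu]
  rw [eq_borelElement_mul_lowerUnipotent_mul_borelElement g c d (pu p ^ m) rfl hd, hvT _ _ hε,
    hv _ _ u d rfl (by rw [hu']; rfl) rfl, hlower]

theorem IsInducedFrom.apply_mul_gamma_pow (hv : IsInducedFrom μ μ' v)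
    (hvT : IsUnitTorusInvariant v) {g : GL (Fin 2) ℚ_[p]} {r : ℕ} {u d : ℚ_[p]ˣ}
    (hg : ‖mat p g 1 0‖ = (p : ℝ) ^ (-((m + r : ℕ) : ℤ)) * ‖mat p g 1 1‖)
    (hu : (u : ℚ_[p]) = (p : ℚ_[p]) ^ (m + r) * (mat p g).det / mat p g 1 0)
    (hd : mat p g 1 1 = d) :
    v (g * gamma p ^ r) = (((μ (pu p) : ℂ))⁻¹ * (Real.sqrt p : ℂ)) ^ r *
      ((μ u : ℂ) * (μ' d : ℂ) * (Real.sqrt ‖(u : ℚ_[p]) / (d : ℚ_[p])‖ : ℂ) *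
        v (lowerPm p m)) := by
  have hp : (p : ℚ_[p]) ≠ 0 := mod_cast (Fact.out : p.Prime).ne_zero
  have hu' : (((pu p ^ r)⁻¹ * u : ℚ_[p]ˣ) : ℚ_[p]) =
      p ^ m * (mat p (g * gamma p ^ r)).det / mat p (g * gamma p ^ r) 1 0 := by
    have h10 : mat p (g * gamma p ^ r) 1 0 = mat p g 1 0 / p ^ r := by simp [mat_mul_gamma_pow]
    rw [det_mat_mul_gamma_pow, h10, Units.val_mul, hu, pow_add, Units.val_inv_eq_inv_val,
      Units.val_pow_eq_pow_val, coe_pu]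
    field_simp
  have hd' : mat p (g * gamma p ^ r) 1 1 = d := by simpa [mat_mul_gamma_pow] using hd
  have hsqrt : Real.sqrt ‖(((pu p ^ r)⁻¹ * u : ℚ_[p]ˣ) : ℚ_[p]) / d‖ =
      Real.sqrt p ^ r * Real.sqrt ‖(u : ℚ_[p]) / d‖ := by
    simpa only [Units.val_mul, Units.val_inv_eq_inv_val, Units.val_pow_eq_pow_val, coe_pu,
      mul_div_assoc] using sqrt_norm_inv_p_pow_mul r (u / d : ℚ_[p])
  rw [hv.apply_of_norm_eq hvT ((norm_mat_mul_gamma_pow_iff g m r).2 hg) hu' hd', hsqrt]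
  simp only [map_mul, map_inv, map_pow, Units.val_mul, Units.val_inv_eq_inv_val,
    Units.val_pow_eq_pow_val, Complex.ofReal_mul, Complex.ofReal_pow]
  ring

end Induced

theorem stmt4_general (m : ℕ) (hm : 1 ≤ m) (μ μ' : ℚ_[p]ˣ →* ℂˣ)
    (α : ℂ) (hα : α = ((μ (pu p) : ℂ))⁻¹ * (Real.sqrt p : ℂ))
    (v : GL (Fin 2) ℚ_[p] → ℂ) (hvB : IsInducedFrom μ μ' v)
    (hvT : IsUnitTorusInvariant v)
    (hvsupp : ∀ k : GL (Fin 2) ℚ_[p], inK p k →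
      ¬ (inI p m k ∧ ¬ inI p (m + 1) k) → v k = 0)
    (hv1 : v (lowerPm p m) = 1) (r : ℕ) (k : GL (Fin 2) ℚ_[p]) :
    (∀ (u d : ℚ_[p]ˣ), inI p (m + r) k → ¬ inI p (m + r + 1) k →
      (u : ℚ_[p]) = (p : ℚ_[p]) ^ (m + r) * (mat p k).det / mat p k 1 0 →
      mat p k 1 1 = d →
      v (k * gamma p ^ r) = α ^ r * (μ u : ℂ) * (μ' d : ℂ)) ∧
    (inK p k → ¬ (inI p (m + r) k ∧ ¬ inI p (m + r + 1) k) →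
      v (k * gamma p ^ r) = 0) := by
  refine ⟨fun u d h1 h2 hu hd ↦ ?_, fun hk hn ↦ hvB.eq_zero_of_norm_ne hm hvsupp ?_⟩
  · have hc := (h1.1.inI_and_not_inI_succ_iff (by lia)).1 ⟨h1, h2⟩
    have hd1 : ‖(d : ℚ_[p])‖ = 1 := hd ▸ (h1.2.resolve_left (by lia)).2.1
    have hu1 : ‖(u : ℚ_[p])‖ = 1 := by
      have hp : (p : ℝ) ≠ 0 := mod_cast (Fact.out : p.Prime).ne_zero
      rw [hu, norm_div, norm_mul, h1.1.2, hc, hd, hd1, Padic.norm_p_pow,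
        div_self (mul_ne_zero (zpow_ne_zero _ hp) one_ne_zero)]
    rw [hvB.apply_mul_gamma_pow hvT hc hu hd, norm_div, hu1, hd1, hv1, div_one, Real.sqrt_one,
      Complex.ofReal_one, mul_one, mul_one, hα, mul_assoc]
  · rwa [Ne, norm_mat_mul_gamma_pow_iff, ← hk.inI_and_not_inI_succ_iff (by lia)]

/-- Values of the translates `γ^r · v` of the new vector `v` of the principal
series `Ind_B^G (μ ⊗ μ')` when both `μ` and `μ'` are ramified, with
`m = cond(μ') ≥ 1` and conductor `n = cond(μ) + cond(μ') > m`. -/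
theorem stmt4 (m n : ℕ) (hm : 1 ≤ m) (hmn : m < n)
    (μ μ' : ℚ_[p]ˣ →* ℂˣ)
    (hμtriv : TrivialOnOnePlusP p (n - m) μ)
    (hμ'triv : TrivialOnOnePlusP p m μ')
    (hμram : ¬ Unramified p μ) (hμ'ram : ¬ Unramified p μ')
    (α : ℂ) (hα : α = ((μ (pu p) : ℂ))⁻¹ * (Real.sqrt p : ℂ))
    (v : GL (Fin 2) ℚ_[p] → ℂ)
    (hvB : ∀ (b g : GL (Fin 2) ℚ_[p]) (a d : ℚ_[p]ˣ),
      mat p b 1 0 = 0 → mat p b 0 0 = a → mat p b 1 1 = d →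
      v (b * g) = (μ a : ℂ) * (μ' d : ℂ) *
        (Real.sqrt ‖(a : ℚ_[p]) / (d : ℚ_[p])‖ : ℂ) * v g)
    (hvI : ∀ (g k : GL (Fin 2) ℚ_[p]) (d : ℚ_[p]ˣ),
      inI p n k → mat p k 1 1 = d →
      v (g * k) = (μ d : ℂ) * (μ' d : ℂ) * v g)
    (hvsupp : ∀ k : GL (Fin 2) ℚ_[p], inK p k →
      ¬ (inI p m k ∧ ¬ inI p (m + 1) k) → v k = 0)
    (hv1 : v (lowerPm p m) = 1) :
    ∀ (r : ℕ) (k : GL (Fin 2) ℚ_[p]),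
      (∀ (u d : ℚ_[p]ˣ), inI p (m + r) k → ¬ inI p (m + r + 1) k →
        (u : ℚ_[p]) = (p : ℚ_[p]) ^ (m + r) * (mat p k).det / mat p k 1 0 →
        mat p k 1 1 = d →
        v (k * gamma p ^ r) = α ^ r * (μ u : ℂ) * (μ' d : ℂ)) ∧
      (inK p k → ¬ (inI p (m + r) k ∧ ¬ inI p (m + r + 1) k) →
        v (k * gamma p ^ r) = 0) := by
  exact stmt4_general p m hm μ μ' α hα v hvB
    (fun g ε hε ↦ by simpa using hvI g _ 1 (inI_borelElement_zero_one hε n) rfl) hvsupp hv1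
end
end

section
/- Let eta : Q_p^* -> C^* be an unramified group homomorphism and set alpha = eta(p)^{-1} * p and beta = eta(p)^{-1} * p^{-1}. Let v : G -> C be a function such that v(b*g) = eta(det(b)) * |a/d| * v(g) for every b = [[a,b0],[0,d]] in B and g in G, and such that v(k) = 1 for every k in K. Then for every integer r >= 0 and every k in K: v(k*gamma^r) = alpha^s * beta^{r-s} if k lies in I_s \ I_{s+1} for some 0 <= s <= r-1, and v(k*gamma^r) = alpha^r if k lies in I_r. Moreover, for every r >= 1: v(k*gamma^r) - alpha * v(k*gamma^{r-1}) equals alpha^s * beta^{r-s} - alpha^{s+1} * beta^{r-1-s} if k lies in I_s \ I_{s+1} with 0 <= s <= r-1 and equals 0 if k lies in I_r; and v(k*gamma^r) - beta * v(k*gamma^{r-1}) equals alpha^r * (1 - beta/alpha) if k lies in I_r and equals 0 if k lies in K \ I_r. -/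
open Matrix

noncomputable section

variable (p : ℕ) [Fact p.Prime]

/-!
The sup norm of the bottom row of a matrix is invariant under right multiplication by `GL₂(𝒪)`, and
on an upper triangular matrix it is the norm of the lower diagonal entry. The Iwasawa decomposition
`G = B * K` therefore gives the spherical vector in closed form,
`v g = η (det g) * |det g| / ‖bottom row of g‖²`. For `k` in `K` with bottom row `(c, d)`, the
bottom row of `k * γ ^ r` is `(c * p ^ (-r), d)`, of norm `max 1 (|c| * p ^ r)`, so
`v (k * γ ^ r) = α ^ r / (max 1 (|c| * p ^ r))²`. On `I_s \ I_{s+1}` one has `|c| = p ^ (-s)`, and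
the theorem follows from `α / p ^ 2 = β`.
-/

section UltrametricMatrix

theorem norm_dotProduct_le_of_forall_norm_le_one {m R : Type*} [Fintype m] [SeminormedRing R]
    [IsUltrametricDist R] (x : m → R) {y : m → R} (hy : ∀ i, ‖y i‖ ≤ 1) : ‖x ⬝ᵥ y‖ ≤ ‖x‖ := by
  refine IsUltrametricDist.norm_sum_le_of_forall_le_of_nonneg (norm_nonneg x) fun i _ => ?_
  calc ‖x i * y i‖ ≤ ‖x i‖ * ‖y i‖ := norm_mul_le _ _
    _ ≤ ‖x i‖ := mul_le_of_le_one_right (norm_nonneg _) (hy i)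
    _ ≤ ‖x‖ := norm_le_pi_norm x i

theorem norm_vecMul_le_of_forall_norm_le_one {m n R : Type*} [Fintype m] [Fintype n]
    [SeminormedRing R] [IsUltrametricDist R] (x : m → R) {A : Matrix m n R}
    (hA : ∀ i j, ‖A i j‖ ≤ 1) : ‖x ᵥ* A‖ ≤ ‖x‖ :=
  (pi_norm_le_iff_of_nonneg (norm_nonneg x)).2 fun j =>
    norm_dotProduct_le_of_forall_norm_le_one x fun i => hA i j

theorem norm_mul_apply_le_one {l m n R : Type*} [Fintype m] [SeminormedRing R]
    [IsUltrametricDist R] {A : Matrix l m R} {B : Matrix m n R} (hA : ∀ i j, ‖A i j‖ ≤ 1)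
    (hB : ∀ i j, ‖B i j‖ ≤ 1) (i : l) (j : n) : ‖(A * B) i j‖ ≤ 1 :=
  (norm_dotProduct_le_of_forall_norm_le_one (A i) fun k => hB k j).trans
    ((pi_norm_le_iff_of_nonneg zero_le_one).2 (hA i))

variable {n R : Type*} [Fintype n] [DecidableEq n] [NormedCommRing R] [NormOneClass R]
  [IsUltrametricDist R]

theorem norm_det_le_one {A : Matrix n n R} (hA : ∀ i j, ‖A i j‖ ≤ 1) : ‖A.det‖ ≤ 1 := by
  rw [Matrix.det_apply']
  refine IsUltrametricDist.norm_sum_le_of_forall_le_of_nonneg zero_le_one fun σ _ => ?_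
  have hprod : ‖∏ i, A (σ i) i‖ ≤ 1 :=
    (Finset.norm_prod_le Finset.univ fun i => A (σ i) i).trans
      (Finset.prod_le_one (fun _ _ => norm_nonneg _) fun i _ => hA (σ i) i)
  exact (norm_mul_le _ _).trans
    (mul_le_one₀ (IsUltrametricDist.norm_intCast_le_one R _) (norm_nonneg _) hprod)

theorem norm_adjugate_apply_le_one {A : Matrix n n R} (hA : ∀ i j, ‖A i j‖ ≤ 1) (i j : n) :
    ‖A.adjugate i j‖ ≤ 1 := by
  rw [Matrix.adjugate_apply]
  refine norm_det_le_one fun k l => ?_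
  rw [Matrix.updateRow_apply]
  split_ifs
  · rw [Pi.single_apply]
    split_ifs <;> simp
  · exact hA k l

end UltrametricMatrix

section IntegralSubgroup

variable {n F : Type*} [Fintype n] [DecidableEq n] [NormedField F] [IsUltrametricDist F]

variable (n F) in
/-- The subgroup `GL_n(𝒪)` of `GL_n(F)`, where `𝒪` is the closed unit ball of `F`. -/
def integralSubgroup : Subgroup (GL n F) where
  carrier := {g | (∀ i j, ‖g i j‖ ≤ 1) ∧ ‖g.val.det‖ = 1}
  mul_mem' := fun ⟨hg, hg'⟩ ⟨hh, hh'⟩ =>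
    ⟨norm_mul_apply_le_one hg hh, by simp [hg', hh']⟩
  one_mem' := by
    refine ⟨fun i j => ?_, by simp⟩
    rw [Units.val_one, Matrix.one_apply]
    split_ifs <;> simp
  inv_mem' := fun {g} ⟨hg, hg'⟩ => by
    refine ⟨fun i j => ?_, by simp [hg']⟩
    simpa [Matrix.inv_def, hg'] using norm_adjugate_apply_le_one hg i j

theorem norm_vecMul_of_mem_integralSubgroup {k : GL n F} (hk : k ∈ integralSubgroup n F)
    (x : n → F) : ‖x ᵥ* k.val‖ = ‖x‖ := by
  refine le_antisymm (norm_vecMul_le_of_forall_norm_le_one x hk.1) ?_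
  calc ‖x‖ = ‖(x ᵥ* k.val) ᵥ* (k⁻¹).val‖ := by
        rw [Matrix.vecMul_vecMul, ← Units.val_mul, mul_inv_cancel, Units.val_one, Matrix.vecMul_one]
    _ ≤ ‖x ᵥ* k.val‖ := norm_vecMul_le_of_forall_norm_le_one _ (inv_mem hk).1

theorem norm_row_mul_of_mem_integralSubgroup {k : GL n F} (hk : k ∈ integralSubgroup n F)
    (g : GL n F) (i : n) : ‖(g * k) i‖ = ‖g i‖ :=
  norm_vecMul_of_mem_integralSubgroup hk (g i)

theorem norm_row_of_mem_integralSubgroup {k : GL n F} (hk : k ∈ integralSubgroup n F) (i : n) :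
    ‖k i‖ = 1 := by
  have hrow : (1 : Matrix n n F) i = Pi.single i 1 := by
    ext j
    rw [Matrix.one_apply, Pi.single_apply]
    simp only [eq_comm]
  rw [← one_mul k, norm_row_mul_of_mem_integralSubgroup hk, Units.val_one, hrow, Pi.norm_single,
    norm_one]

end IntegralSubgroup

theorem norm_fin_two {E : Type*} [SeminormedAddGroup E] (x : Fin 2 → E) :
    ‖x‖ = max ‖x 0‖ ‖x 1‖ := by
  rw [← coe_nnnorm, ← coe_nnnorm, ← coe_nnnorm, ← NNReal.coe_max, NNReal.coe_inj]
  refine eq_of_forall_ge_iff fun c => ?_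
  simp only [pi_nnnorm_le_iff, Fin.forall_fin_two, max_le_iff]

theorem exists_norm_le_one_eq_mul {F : Type*} [NormedDivisionRing F] {x y : F} (h : ‖x‖ ≤ ‖y‖) :
    ∃ t : F, ‖t‖ ≤ 1 ∧ x = t * y := by
  refine ⟨x / y, ?_, ?_⟩
  · rw [norm_div]
    exact div_le_one_of_le₀ h (norm_nonneg y)
  · rcases eq_or_ne y 0 with rfl | hy
    · simpa using h
    · exact (div_mul_cancel₀ x hy).symm

section Spherical

variable {F : Type*} [NormedField F] [IsUltrametricDist F]

theorem norm_diag_eq_one_of_mem_integralSubgroup {k : GL (Fin 2) F}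
    (hk : k ∈ integralSubgroup (Fin 2) F) (hc : ‖k 1 0‖ < 1) : ‖k 0 0‖ = 1 ∧ ‖k 1 1‖ = 1 := by
  have hd : ‖k 1 1‖ = 1 := by
    have h := norm_row_of_mem_integralSubgroup hk 1
    rw [norm_fin_two] at h
    exact (max_eq_iff.1 h).resolve_left (fun h' => hc.ne h'.1) |>.1
  have hbc : ‖k 0 1 * k 1 0‖ < 1 := by
    rw [norm_mul]
    exact mul_lt_one_of_nonneg_of_lt_one_right (hk.1 0 1) (norm_nonneg _) hc
  have had : ‖k 0 0 * k 1 1‖ = 1 := by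
    have hdet : k 0 0 * k 1 1 = k.val.det + k 0 1 * k 1 0 := by
      rw [Matrix.det_fin_two, sub_add_cancel]
    rw [hdet, IsUltrametricDist.norm_add_eq_max_of_norm_ne_norm (by rw [hk.2]; exact hbc.ne'),
      hk.2, max_eq_left hbc.le]
  rw [norm_mul, hd, mul_one] at had
  exact ⟨had, hd⟩

theorem exists_mem_integralSubgroup_mul_apply_eq_zero (g : GL (Fin 2) F) :
    ∃ k ∈ integralSubgroup (Fin 2) F, (g * k) 1 0 = 0 := by
  rcases le_total ‖g 1 0‖ ‖g 1 1‖ with h | h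
  · obtain ⟨t, ht, hgt⟩ := exists_norm_le_one_eq_mul h
    refine ⟨.mkOfDetNeZero !![1, 0; -t, 1] (by simp), ⟨fun i j => ?_, ?_⟩, ?_⟩
    · fin_cases i <;> fin_cases j <;> simp [GeneralLinearGroup.mkOfDetNeZero, ht]
    · simp [GeneralLinearGroup.mkOfDetNeZero]
    · simp [GeneralLinearGroup.mkOfDetNeZero, Matrix.mul_apply, hgt, mul_comm t]
  · obtain ⟨t, ht, hgt⟩ := exists_norm_le_one_eq_mul h
    refine ⟨.mkOfDetNeZero !![-t, 1; 1, 0] (by simp), ⟨fun i j => ?_, ?_⟩, ?_⟩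
    · fin_cases i <;> fin_cases j <;> simp [GeneralLinearGroup.mkOfDetNeZero, ht]
    · simp [GeneralLinearGroup.mkOfDetNeZero]
    · simp [GeneralLinearGroup.mkOfDetNeZero, Matrix.mul_apply, hgt, mul_comm t]

theorem iwasawa_decomposition (g : GL (Fin 2) F) :
    ∃ b k : GL (Fin 2) F, b 1 0 = 0 ∧ k ∈ integralSubgroup (Fin 2) F ∧ b * k = g := by
  obtain ⟨k, hk, hgk⟩ := exists_mem_integralSubgroup_mul_apply_eq_zero g
  exact ⟨g * k, k⁻¹, hgk, inv_mem hk, mul_inv_cancel_right g k⟩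

/-- `v` is the `GL₂(𝒪)`-invariant vector, with value `1` at the identity, of the principal series
`Ind_B^G ((η ∘ det) δ^{1/2})`. Induction is normalized, so the factor `‖a / d‖ = δ` is the product
of the `δ^{1/2}` of the inducing character and that of the normalization. -/
structure IsSphericalVector (η : Fˣ →* ℂˣ) (v : GL (Fin 2) F → ℂ) : Prop where
  map_upperTriangular_mul (b g : GL (Fin 2) F) (hb : b 1 0 = 0) :
    v (b * g) = (η (GeneralLinearGroup.det b) : ℂ) * (‖b 0 0 / b 1 1‖ : ℝ) * v g
  map_integral (k : GL (Fin 2) F) (hk : k ∈ integralSubgroup (Fin 2) F) : v k = 1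

theorem IsSphericalVector.apply_eq_norm_det_div_norm_row_sq {η : Fˣ →* ℂˣ} {v : GL (Fin 2) F → ℂ}
    (hv : IsSphericalVector η v) (hη : ∀ u : Fˣ, ‖(u : F)‖ = 1 → η u = 1) (g : GL (Fin 2) F) :
    v g = (η (GeneralLinearGroup.det g) : ℂ) * (‖g.val.det‖ / ‖g 1‖ ^ 2 : ℝ) := by
  obtain ⟨b, k, hb, hk, rfl⟩ := iwasawa_decomposition g
  have hη_det : η (GeneralLinearGroup.det (b * k)) = η (GeneralLinearGroup.det b) := by
    have hk_det : η (GeneralLinearGroup.det k) = 1 := hη _ hk.2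
    rw [map_mul, map_mul, hk_det, mul_one]
  have hrow : ‖(b * k) 1‖ = ‖b 1 1‖ := by
    rw [norm_row_mul_of_mem_integralSubgroup hk, norm_fin_two, hb, norm_zero,
      max_eq_right (norm_nonneg _)]
  have hdet : ‖(b * k).val.det‖ = ‖b 0 0‖ * ‖b 1 1‖ := by
    rw [Units.val_mul, Matrix.det_mul, norm_mul, hk.2, mul_one, Matrix.det_fin_two, hb, mul_zero,
      sub_zero, norm_mul]
  have hb11 : ‖b 1 1‖ ≠ 0 :=
    right_ne_zero_of_mul <| hdet ▸ norm_ne_zero_iff.2 (GeneralLinearGroup.det (b * k)).ne_zero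
  rw [hv.map_upperTriangular_mul b k hb, hv.map_integral k hk, mul_one, hη_det, hrow, hdet,
    norm_div, sq, mul_div_mul_right _ _ hb11]

end Spherical

section Padic

variable {p}

theorem inK_iff_mem_integralSubgroup {g : GL (Fin 2) ℚ_[p]} :
    inK p g ↔ g ∈ integralSubgroup (Fin 2) ℚ_[p] :=
  Iff.rfl

theorem mul_gamma_pow_apply_zero (g : GL (Fin 2) ℚ_[p]) (r : ℕ) (i : Fin 2) :
    (g * gamma p ^ r) i 0 = g i 0 * (p : ℚ_[p])⁻¹ ^ r := by
  induction r with
  | zero => simp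
  | succ r ih =>
    rw [pow_succ, ← mul_assoc, Units.val_mul, Matrix.mul_apply, Fin.sum_univ_two, ih]
    simp [gamma, GeneralLinearGroup.mkOfDetNeZero, pow_succ, mul_assoc]

theorem mul_gamma_pow_apply_one (g : GL (Fin 2) ℚ_[p]) (r : ℕ) (i : Fin 2) :
    (g * gamma p ^ r) i 1 = g i 1 := by
  induction r with
  | zero => simp
  | succ r ih =>
    rw [pow_succ, ← mul_assoc, Units.val_mul, Matrix.mul_apply, Fin.sum_univ_two, ih]
    simp [gamma, GeneralLinearGroup.mkOfDetNeZero]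

theorem det_gamma : GeneralLinearGroup.det (gamma p) = (pu p)⁻¹ := by
  ext
  simp [gamma, GeneralLinearGroup.mkOfDetNeZero, pu]

theorem norm_row_mul_gamma_pow {k : GL (Fin 2) ℚ_[p]} (hk : inK p k) (r : ℕ) :
    ‖(k * gamma p ^ r) 1‖ = max 1 (‖k 1 0‖ * (p : ℝ) ^ r) := by
  have hrow : max ‖k 1 0‖ ‖k 1 1‖ = 1 := by
    rw [← norm_fin_two, norm_row_of_mem_integralSubgroup (inK_iff_mem_integralSubgroup.1 hk)]
  have hp : 1 ≤ (p : ℝ) ^ r := one_le_pow₀ (mod_cast (Fact.out : p.Prime).one_le)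
  have hc : ‖k 1 0‖ ≤ ‖k 1 0‖ * (p : ℝ) ^ r := le_mul_of_one_le_right (norm_nonneg _) hp
  calc ‖(k * gamma p ^ r) 1‖ = max (‖k 1 0‖ * (p : ℝ) ^ r) ‖k 1 1‖ := by
        rw [norm_fin_two, mul_gamma_pow_apply_zero, mul_gamma_pow_apply_one, norm_mul, norm_pow,
          norm_inv, Padic.norm_p, inv_inv]
    _ = max (max ‖k 1 0‖ ‖k 1 1‖) (‖k 1 0‖ * (p : ℝ) ^ r) := by
        rw [max_right_comm, max_eq_right hc]
    _ = max 1 (‖k 1 0‖ * (p : ℝ) ^ r) := by rw [hrow]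

theorem inI_iff_norm_le {k : GL (Fin 2) ℚ_[p]} (hk : inK p k) (s : ℕ) :
    inI p s k ↔ ‖k 1 0‖ ≤ (p : ℝ) ^ (-(s : ℤ)) := by
  rcases s.eq_zero_or_pos with rfl | hs
  · have hc : ‖k 1 0‖ ≤ 1 := hk.1 1 0
    simpa [inI, hk] using hc
  refine ⟨fun h => (h.2.resolve_left hs.ne').2.2, fun h => ⟨hk, .inr ?_⟩⟩
  have hc : ‖k 1 0‖ < 1 :=
    h.trans_lt (zpow_lt_one_of_neg₀ (mod_cast (Fact.out : p.Prime).one_lt) (by lia))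
  obtain ⟨ha, hd⟩ := norm_diag_eq_one_of_mem_integralSubgroup (inK_iff_mem_integralSubgroup.1 hk) hc
  exact ⟨ha, hd, h⟩

theorem norm_apply_eq_of_inI_of_not_inI_succ {k : GL (Fin 2) ℚ_[p]} {s : ℕ} (h : inI p s k)
    (h' : ¬ inI p (s + 1) k) : ‖k 1 0‖ = (p : ℝ) ^ (-(s : ℤ)) := by
  rw [inI_iff_norm_le h.1, Padic.norm_le_pow_iff_norm_lt_pow_add_one, not_lt] at h'
  refine ((inI_iff_norm_le h.1 s).1 h).antisymm ?_
  simpa using h'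

theorem inI.mono {k : GL (Fin 2) ℚ_[p]} {s r : ℕ} (h : inI p r k) (hsr : s ≤ r) : inI p s k := by
  refine (inI_iff_norm_le h.1 s).2 (((inI_iff_norm_le h.1 r).1 h).trans ?_)
  exact zpow_le_zpow_right₀ (mod_cast (Fact.out : p.Prime).one_le) (by lia)

theorem exists_inI_not_inI_succ {k : GL (Fin 2) ℚ_[p]} (hk : inK p k) {r : ℕ}
    (h : ¬ inI p r k) : ∃ s < r, inI p s k ∧ ¬ inI p (s + 1) k := by
  obtain ⟨s, hs, hs'⟩ := Nat.exists_not_and_succ_of_not_zero_of_exists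
    (p := fun s => ¬ inI p s k) (not_not.2 ⟨hk, .inl rfl⟩) ⟨r, h⟩
  exact ⟨s, not_le.1 fun hrs => h ((not_not.1 hs).mono hrs), not_not.1 hs, hs'⟩

namespace IsSphericalVector

variable {η : ℚ_[p]ˣ →* ℂˣ} {v : GL (Fin 2) ℚ_[p] → ℂ}

theorem apply_mul_gamma_pow (hv : IsSphericalVector η v) (hη : Unramified p η)
    {k : GL (Fin 2) ℚ_[p]} (hk : inK p k) (r : ℕ) :
    v (k * gamma p ^ r) =
      ((η (pu p) : ℂ)⁻¹ * p) ^ r / (max 1 (‖k 1 0‖ * (p : ℝ) ^ r) : ℝ) ^ 2 := by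
  have hη_det : (η (GeneralLinearGroup.det (k * gamma p ^ r)) : ℂ) = (η (pu p) : ℂ)⁻¹ ^ r := by
    rw [map_mul, map_mul, hη _ hk.2, one_mul, map_pow, det_gamma]
    simp
  have hdet : ‖(k * gamma p ^ r).val.det‖ = (p : ℝ) ^ r := by
    have hk_det : ‖k.val.det‖ = 1 := hk.2
    simp [hk_det, gamma, GeneralLinearGroup.mkOfDetNeZero]
  rw [hv.apply_eq_norm_det_div_norm_row_sq hη, hη_det, hdet, norm_row_mul_gamma_pow hk]
  push_cast
  ring

theorem apply_mul_gamma_pow_of_inI (hv : IsSphericalVector η v) (hη : Unramified p η)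
    {k : GL (Fin 2) ℚ_[p]} {r : ℕ} (h : inI p r k) :
    v (k * gamma p ^ r) = ((η (pu p) : ℂ)⁻¹ * p) ^ r := by
  have hp : (p : ℝ) ≠ 0 := mod_cast (Fact.out : p.Prime).ne_zero
  have hc : ‖k 1 0‖ * (p : ℝ) ^ r ≤ 1 := by
    calc ‖k 1 0‖ * (p : ℝ) ^ r ≤ (p : ℝ) ^ (-(r : ℤ)) * (p : ℝ) ^ r := by
          gcongr
          exact (inI_iff_norm_le h.1 r).1 h
      _ = 1 := by rw [_root_.zpow_neg, zpow_natCast, inv_mul_cancel₀ (pow_ne_zero r hp)]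
  rw [hv.apply_mul_gamma_pow hη h.1, max_eq_left hc, Complex.ofReal_one, one_pow, div_one]

theorem apply_mul_gamma_pow_of_inI_of_not_inI_succ (hv : IsSphericalVector η v)
    (hη : Unramified p η) {k : GL (Fin 2) ℚ_[p]} {r s : ℕ} (hsr : s ≤ r) (h : inI p s k)
    (h' : ¬ inI p (s + 1) k) :
    v (k * gamma p ^ r) =
      ((η (pu p) : ℂ)⁻¹ * p) ^ s * ((η (pu p) : ℂ)⁻¹ * (p : ℂ)⁻¹) ^ (r - s) := by
  obtain ⟨m, rfl⟩ := Nat.exists_eq_add_of_le hsr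
  have hp : (p : ℝ) ≠ 0 := mod_cast (Fact.out : p.Prime).ne_zero
  have hpC : (p : ℂ) ≠ 0 := mod_cast (Fact.out : p.Prime).ne_zero
  have hc : ‖k 1 0‖ * (p : ℝ) ^ (s + m) = (p : ℝ) ^ m := by
    rw [norm_apply_eq_of_inI_of_not_inI_succ h h', _root_.zpow_neg, zpow_natCast, pow_add,
      inv_mul_cancel_left₀ (pow_ne_zero s hp)]
  have hpm : 1 ≤ (p : ℝ) ^ m := one_le_pow₀ (mod_cast (Fact.out : p.Prime).one_le)
  rw [hv.apply_mul_gamma_pow hη h.1, hc, max_eq_right hpm, Nat.add_sub_cancel_left]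
  push_cast
  simp only [pow_add, mul_pow, inv_pow]
  field_simp

end IsSphericalVector

end Padic

/-- Lemma «calcul-SP-NR2»: values of the translates `γ^r · v^K` of the
`K`-invariant vector `v^K` in `Ind_B^G ((η ∘ det) δ^{1/2})`, for `η`
unramified, together with the difference formulas. -/
theorem stmt6 (η : ℚ_[p]ˣ →* ℂˣ) (hη : Unramified p η)
    (α β : ℂ)
    (hα : α = ((η (pu p) : ℂ))⁻¹ * (p : ℂ))
    (hβ : β = ((η (pu p) : ℂ))⁻¹ * (p : ℂ)⁻¹)
    (v : GL (Fin 2) ℚ_[p] → ℂ)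
    (hvB : ∀ (b g : GL (Fin 2) ℚ_[p]), mat p b 1 0 = 0 →
      v (b * g) = (η (Matrix.GeneralLinearGroup.det b) : ℂ) *
        (‖mat p b 0 0 / mat p b 1 1‖ : ℝ) * v g)
    (hvK : ∀ k : GL (Fin 2) ℚ_[p], inK p k → v k = 1) :
    ∀ (r : ℕ) (k : GL (Fin 2) ℚ_[p]),
      -- values of `γ^r · v^K`
      ((∀ s : ℕ, s + 1 ≤ r → inI p s k → ¬ inI p (s + 1) k →
          v (k * gamma p ^ r) = α ^ s * β ^ (r - s)) ∧
        (inI p r k → v (k * gamma p ^ r) = α ^ r)) ∧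
      -- difference formulas, for `r ≥ 1`
      (1 ≤ r →
        ((∀ s : ℕ, s + 1 ≤ r → inI p s k → ¬ inI p (s + 1) k →
            v (k * gamma p ^ r) - α * v (k * gamma p ^ (r - 1)) =
              α ^ s * β ^ (r - s) - α ^ (s + 1) * β ^ (r - 1 - s)) ∧
          (inI p r k →
            v (k * gamma p ^ r) - α * v (k * gamma p ^ (r - 1)) = 0)) ∧
        ((inI p r k →
            v (k * gamma p ^ r) - β * v (k * gamma p ^ (r - 1)) =
              α ^ r * (1 - β / α)) ∧
          (inK p k → ¬ inI p r k →
            v (k * gamma p ^ r) - β * v (k * gamma p ^ (r - 1)) = 0))) := by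
  have hv : IsSphericalVector η v :=
    ⟨hvB, fun k hk => hvK k (inK_iff_mem_integralSubgroup.2 hk)⟩
  have hv_top {r k} (h : inI p r k) : v (k * gamma p ^ r) = α ^ r :=
    hα ▸ hv.apply_mul_gamma_pow_of_inI hη h
  have hv_shell {r s k} (hsr : s ≤ r) (h : inI p s k) (h' : ¬ inI p (s + 1) k) :
      v (k * gamma p ^ r) = α ^ s * β ^ (r - s) :=
    hα ▸ hβ ▸ hv.apply_mul_gamma_pow_of_inI_of_not_inI_succ hη hsr h h'
  intro r k
  refine ⟨⟨fun s hs => hv_shell (Nat.le_of_succ_le hs), hv_top⟩, fun hr => ?_⟩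
  obtain ⟨r, rfl⟩ := Nat.exists_eq_add_of_le' hr
  rw [add_tsub_cancel_right]
  refine ⟨⟨fun s hs h h' => ?_, fun h => ?_⟩, fun h => ?_, fun hk h => ?_⟩
  · rw [hv_shell (by lia) h h', hv_shell (by lia) h h']
    ring
  · rw [hv_top h, hv_top (h.mono r.le_succ)]
    ring
  · have hα0 : α ≠ 0 := by simp [hα, (Fact.out : p.Prime).ne_zero]
    rw [hv_top h, hv_top (h.mono r.le_succ)]
    field_simp
    ring
  · obtain ⟨s, hs, h, h'⟩ := exists_inI_not_inI_succ hk h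
    rw [hv_shell (by lia) h h', hv_shell (by lia) h h', Nat.succ_sub (by lia), pow_succ]
    ring
end
end
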